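/- arXiv:2311.00158 — 2 statements merged into one kernel-verified Lean document; each statement's English description precedes it below -/
import Mathlib

section
/- Let G be a group acting on a set X and let L ⊆ X be a subset such that for every g ∈ G the symmetric difference of g • L and L is finite. Then the map φ : G → ℤ defined by φ(g) = |(g • L) \ L| − |L \ (g • L)| (where |·| denotes the cardinality of these finite sets, viewed as an integer) is a group homomorphism. -/
open Pointwise

/-!
The net flow of `g` is the cardinality of `g • L` relative to `L`. Relative cardinality telescopes
along `(g₁ * g₂) • L`, `g₁ • L`, `L`, and translating by `g₁` identifies the first term with the
cardinality of `g₂ • L` relative to `L`.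
-/

section RelCard

open scoped symmDiff

variable {X Y : Type*} {A B C : Set X}

/-- The cardinality of `A` relative to `B`, which makes sense of `|A| - |B|` for possibly infinite
sets with finite symmetric difference. An infinite `A \ B` or `B \ A` contributes `0`. -/
noncomputable def relCard (A B : Set X) : ℤ :=
  ((A \ B).ncard : ℤ) - (B \ A).ncard

theorem relCard_eq_ncard_sub_ncard (hA : A.Finite) (hB : B.Finite) :
    relCard A B = (A.ncard : ℤ) - B.ncard := by
  have hAB : (A \ B).ncard + B.ncard = (A ∪ B).ncard := Set.ncard_sdiff_add_ncard A B hA hB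
  have hBA : (B \ A).ncard + A.ncard = (A ∪ B).ncard :=
    Set.union_comm B A ▸ Set.ncard_sdiff_add_ncard B A hB hA
  unfold relCard
  lia

theorem relCard_sdiff_sdiff {I : Set X} (hA : I ⊆ A) (hB : I ⊆ B) :
    relCard (A \ I) (B \ I) = relCard A B := by
  simp only [relCard, sdiff_sdiff_sdiff_cancel_right hA, sdiff_sdiff_sdiff_cancel_right hB]

theorem relCard_image_image {f : X → Y} (hf : f.Injective) (A B : Set X) :
    relCard (f '' A) (f '' B) = relCard A B := by
  simp only [relCard, ← Set.image_sdiff hf, Set.ncard_image_of_injective _ hf]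

theorem relCard_smul_smul {G : Type*} [SMul G X] [IsLeftCancelSMul G X] (g : G) (A B : Set X) :
    relCard (g • A) (g • B) = relCard A B :=
  relCard_image_image (IsLeftCancelSMul.left_cancel g) A B

theorem relCard_add_relCard (hAB : (A ∆ B).Finite) (hBC : (B ∆ C).Finite) :
    relCard A B + relCard B C = relCard A C := by
  -- Removing the common part leaves three finite sets, for which the sum telescopes.
  let I := A ∩ B ∩ C
  have hIA : I ⊆ A := fun _ hx ↦ hx.1.1
  have hIB : I ⊆ B := fun _ hx ↦ hx.1.2
  have hIC : I ⊆ C := fun _ hx ↦ hx.2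
  have finite_sdiff {S : Set X} (hS : S \ I ⊆ A ∆ B ∪ B ∆ C) : (S \ I).Finite :=
    (hAB.union hBC).subset hS
  have hA : (A \ I).Finite := finite_sdiff (by grind)
  have hB : (B \ I).Finite := finite_sdiff (by grind)
  have hC : (C \ I).Finite := finite_sdiff (by grind)
  calc relCard A B + relCard B C
      = relCard (A \ I) (B \ I) + relCard (B \ I) (C \ I) := by
        rw [relCard_sdiff_sdiff hIA hIB, relCard_sdiff_sdiff hIB hIC]
    _ = ((A \ I).ncard - (B \ I).ncard) + ((B \ I).ncard - (C \ I).ncard) := by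
        rw [relCard_eq_ncard_sub_ncard hA hB, relCard_eq_ncard_sub_ncard hB hC]
    _ = (A \ I).ncard - (C \ I).ncard := sub_add_sub_cancel _ _ _
    _ = relCard A C := by
        rw [← relCard_eq_ncard_sub_ncard hA hC, relCard_sdiff_sdiff hIA hIC]

end RelCard

theorem netFlow_is_homomorphism_general
    {G X : Type*} [Semigroup G] [SemigroupAction G X] [IsLeftCancelSMul G X] (L : Set X)
    (hfin : ∀ g : G, ((g • L) \ L).Finite ∧ (L \ (g • L)).Finite)
    (φ : G → ℤ)
    (hφ : ∀ g : G, φ g = (((g • L) \ L).ncard : ℤ) - ((L \ (g • L)).ncard : ℤ))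
    (g₁ g₂ : G) : φ (g₁ * g₂) = φ g₁ + φ g₂ := by
  have hφ_relCard (g : G) : φ g = relCard (g • L) L := hφ g
  have hL (g : G) : (symmDiff (g • L) L).Finite := (hfin g).1.union (hfin g).2
  have hgL : (symmDiff (g₁ • g₂ • L) (g₁ • L)).Finite := by
    have h := (hL g₂).image (g₁ • ·)
    rwa [Set.image_symmDiff (IsLeftCancelSMul.left_cancel g₁)] at h
  have mul_smul_L : (g₁ * g₂) • L = g₁ • g₂ • L := by
    simp only [← Set.image_smul, Set.image_image, mul_smul]
  calc φ (g₁ * g₂)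
      = relCard (g₁ • g₂ • L) L := by rw [hφ_relCard, mul_smul_L]
    _ = relCard (g₁ • g₂ • L) (g₁ • L) + relCard (g₁ • L) L :=
        (relCard_add_relCard hgL (hL g₁)).symm
    _ = relCard (g₂ • L) L + relCard (g₁ • L) L := by rw [relCard_smul_smul]
    _ = φ g₁ + φ g₂ := by rw [hφ_relCard, hφ_relCard, add_comm]

/-- Let a group `G` act on a set `X` and let `L ⊆ X` be such that
`g • L` and `L` have finite symmetric difference for every `g ∈ G`.  Then the
net-flow map `φ : G → ℤ`, `φ g = |(g • L) \ L| - |L \ (g • L)|`, is a group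
homomorphism. -/
theorem netFlow_is_homomorphism
    {G X : Type*} [Group G] [MulAction G X] (L : Set X)
    (hfin : ∀ g : G, ((g • L) \ L).Finite ∧ (L \ (g • L)).Finite)
    (φ : G → ℤ)
    (hφ : ∀ g : G, φ g = (((g • L) \ L).ncard : ℤ) - ((L \ (g • L)).ncard : ℤ)) :
    ∀ g₁ g₂ : G, φ (g₁ * g₂) = φ g₁ + φ g₂ :=
  netFlow_is_homomorphism_general L hfin φ hφ
end

section
/- Let α ≥ 1 be an ordinal and let d ≥ 1 be a natural number. The ordinal space ω^α·d + 1, i.e., the set {β : β ≤ ω^α·d} of ordinals equipped with the order topology, is self-similar if and only if d = 1. -/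
open Ordinal

/-- A topological space `E` is *self-similar* if for every partition of `E` into
finitely many pairwise disjoint clopen subsets, one of the pieces contains an open
subset homeomorphic to `E`. -/
def IsSelfSimilarSpace (E : Type*) [TopologicalSpace E] : Prop :=
  ∀ (n : ℕ) (P : Fin n → Set E),
    (∀ i, IsClopen (P i)) →
    (Pairwise fun i j => Disjoint (P i) (P j)) →
    (⋃ i, P i) = Set.univ →
    ∃ (i : Fin n) (X : Set E), IsOpen X ∧ X ⊆ P i ∧ Nonempty (X ≃ₜ E)

/-!
If a self-similar space is split into two clopen pieces, one piece contains the range of an open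
self-embedding. An open embedding preserves Cantor–Bendixson rank, so if the `γ`-th derived set is
finite then the embedding permutes it, and that piece contains all of it. A totally separated
self-similar space therefore has at most one point in each finite derived set. In `ω ^ α * d + 1`
the `α`-th derived set consists of `ω ^ α * k` for `1 ≤ k ≤ d`, which forces `d = 1`.

Conversely, in `ω ^ α + 1` every neighbourhood of the top point contains some interval
`(a, ω ^ α]` with `a < ω ^ α`, and `x ↦ succ a + x` maps the whole space homeomorphically onto it,
because `ω ^ α` absorbs smaller ordinals added on the left.
-/

open Filter Order Set Topology
open scoped CantorBendixson

universe u

section DerivedSet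

theorem preimage_derivedSet_of_isOpenEmbedding {X Y : Type*} [TopologicalSpace X]
    [TopologicalSpace Y] {f : X → Y} (hf : IsOpenEmbedding f) (t : Set Y) :
    f ⁻¹' derivedSet t = derivedSet (f ⁻¹' t) := by
  ext x
  simp only [mem_preimage, mem_derivedSet, accPt_iff_frequently, ← hf.map_nhds_eq, frequently_map,
    hf.injective.ne_iff]

variable {X Y : Type u} [TopologicalSpace X] [TopologicalSpace Y] {f : X → Y}

theorem preimage_iteratedDerivedSet_of_isOpenEmbedding (hf : IsOpenEmbedding f) (t : Set Y)
    (a : Ordinal) : f ⁻¹' tᵈ[a] = (f ⁻¹' t)ᵈ[a] := by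
  induction a using Ordinal.limitRecOn with
  | zero => simp only [CantorBendixson.iteratedDerivedSet_zero]
  | add_one a ih =>
    simp only [CantorBendixson.iteratedDerivedSet_succ, relDerivedSet_apply, preimage_inter,
      preimage_derivedSet_of_isOpenEmbedding hf, ih]
  | limit a ha ih =>
    simp only [CantorBendixson.iteratedDerivedSet_limit ha, preimage_iInter]
    exact iInter_congr fun b => ih b b.2

theorem preimage_iteratedDerivedSet_univ (hf : IsOpenEmbedding f) (a : Ordinal) :
    f ⁻¹' Set.univᵈ[a] = Set.univᵈ[a] := by
  rw [preimage_iteratedDerivedSet_of_isOpenEmbedding hf, preimage_univ]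

end DerivedSet

theorem subset_range_of_finite_of_preimage_eq {X : Type*} {f : X → X} {s : Set X}
    (hf : f.Injective) (hs : s.Finite) (hfs : f ⁻¹' s = s) : s ⊆ range f := by
  have hmaps : MapsTo f s s := hfs.ge
  have hbij : BijOn f s s := (hs.injOn_iff_bijOn_of_mapsTo hmaps).1 hf.injOn
  exact hbij.image_eq.ge.trans (image_subset_range f s)

namespace IsSelfSimilarSpace

theorem exists_isOpenEmbedding_of_isClopen {E : Type*} [TopologicalSpace E]
    (hE : IsSelfSimilarSpace E) {A : Set E} (hA : IsClopen A) :
    ∃ f : E → E, IsOpenEmbedding f ∧ (range f ⊆ A ∨ range f ⊆ Aᶜ) := by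
  have hclopen : ∀ i, IsClopen (![A, Aᶜ] i) := Fin.forall_fin_two.2 ⟨hA, hA.compl⟩
  have hdisj : Pairwise fun i j => Disjoint (![A, Aᶜ] i) (![A, Aᶜ] j) := by
    simp [Pairwise, Fin.forall_fin_two, disjoint_compl_left, disjoint_compl_right]
  have hcover : (⋃ i, ![A, Aᶜ] i) = Set.univ := by
    simp [iUnion_eq_univ_iff, Fin.exists_fin_two, em]
  obtain ⟨i, X, hX, hXi, ⟨e⟩⟩ := hE 2 ![A, Aᶜ] hclopen hdisj hcover
  refine ⟨Subtype.val ∘ e.symm, hX.isOpenEmbedding_subtypeVal.comp e.symm.isOpenEmbedding, ?_⟩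
  have hrange : range (Subtype.val ∘ e.symm) = X := by
    rw [e.symm.surjective.range_comp, Subtype.range_coe]
  rw [hrange]
  exact (Fin.exists_fin_two (p := fun i => X ⊆ ![A, Aᶜ] i)).1 ⟨i, hXi⟩

theorem subsingleton_iteratedDerivedSet {E : Type u} [TopologicalSpace E] [TotallySeparatedSpace E]
    (hE : IsSelfSimilarSpace E) {a : Ordinal} (hfin : (Set.univ : Set E)ᵈ[a].Finite) :
    (Set.univ : Set E)ᵈ[a].Subsingleton := by
  intro x hx y hy
  by_contra hxy
  obtain ⟨A, hA, hxA, hyA⟩ := exists_isClopen_of_totally_separated hxy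
  obtain ⟨f, hf, hfA⟩ := hE.exists_isOpenEmbedding_of_isClopen hA
  have hrange : Set.univᵈ[a] ⊆ range f :=
    subset_range_of_finite_of_preimage_eq hf.injective hfin (preimage_iteratedDerivedSet_univ hf a)
  rcases hfA with hfA | hfA
  · exact hyA (hfA (hrange hy))
  · exact hfA (hrange hx) hxA

theorem of_forall_mem_nhds {E : Type*} [TopologicalSpace E] (x : E)
    (h : ∀ U ∈ 𝓝 x, ∃ X ⊆ U, IsOpen X ∧ Nonempty (X ≃ₜ E)) : IsSelfSimilarSpace E := by
  intro n P hP _ hcover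
  obtain ⟨i, hi⟩ := iUnion_eq_univ_iff.1 hcover x
  obtain ⟨X, hXi, hX, e⟩ := h (P i) ((hP i).isOpen.mem_nhds hi)
  exact ⟨i, X, hX, hXi, e⟩

end IsSelfSimilarSpace

section SuccOrder

variable {X : Type*} [LinearOrder X] [SuccOrder X] [TopologicalSpace X] [OrderTopology X]

theorem isClopen_Iic_of_succOrder (a : X) : IsClopen (Iic a) := by
  refine ⟨isClosed_Iic, ?_⟩
  by_cases ha : IsMax a
  · have huniv : Iic a = Set.univ := eq_univ_of_forall fun x => le_of_not_gt (ha.not_lt (b := x))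
    exact huniv ▸ isOpen_univ
  · simpa only [Iio_succ_of_not_isMax ha] using isOpen_Iio (a := succ a)

theorem totallySeparatedSpace_of_succOrder : TotallySeparatedSpace X := by
  refine totallySeparatedSpace_iff_exists_isClopen.2 fun x y hxy => ?_
  rcases hxy.lt_or_gt with h | h
  · exact ⟨Iic x, isClopen_Iic_of_succOrder x, self_mem_Iic, h.not_ge⟩
  · exact ⟨(Iic y)ᶜ, (isClopen_Iic_of_succOrder y).compl, h.not_ge, not_not.2 self_mem_Iic⟩

end SuccOrder

section Ordinal

theorem forall_exists_mem_Ioo_dvd_iff_isSuccPrelimit {b k : Ordinal} (hb : 0 < b) :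
    (∀ a < b * k, ∃ y ∈ Ioo a (b * k), b ∣ y) ↔ IsSuccPrelimit k := by
  rw [isSuccPrelimit_iff_succ_lt]
  constructor
  · intro h z hz
    obtain ⟨_, ⟨hzw, hwk⟩, w, rfl⟩ := h (b * z) ((mul_lt_mul_iff_right₀ hb).2 hz)
    rw [mul_lt_mul_iff_right₀ hb] at hzw hwk
    exact (succ_le_of_lt hzw).trans_lt hwk
  · intro h a ha
    have hak : succ (a / b) < k := h _ ((lt_mul_iff_div_lt hb.ne').1 ha)
    exact ⟨b * succ (a / b), ⟨lt_mul_succ_div a hb.ne', (mul_lt_mul_iff_right₀ hb).2 hak⟩,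
      dvd_mul_right _ _⟩

theorem accPt_and_dvd_iff_mul_omega0_dvd {b x : Ordinal} {s : Set Ordinal} (hb : 0 < b)
    (hx : x ≠ 0) (hs : ∀ y ≠ 0, y ∈ s ↔ b ∣ y) : AccPt x (𝓟 s) ∧ b ∣ x ↔ b * ω ∣ x := by
  have hacc : AccPt x (𝓟 s) ↔ ∀ a < x, ∃ y ∈ Ioo a x, b ∣ y := by
    rw [SuccOrder.accPt_principal, isMin_iff_eq_bot, Ordinal.bot_eq_zero, and_iff_right hx]
    refine forall₂_congr fun a _ => exists_congr fun y => ?_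
    rw [mem_inter_iff, and_comm]
    exact and_congr_right fun hy => hs y (pos_of_gt hy.1).ne'
  rw [hacc]
  constructor
  · rintro ⟨h, k, rfl⟩
    rw [forall_exists_mem_Ioo_dvd_iff_isSuccPrelimit hb, isSuccPrelimit_iff_omega0_dvd] at h
    exact mul_dvd_mul_left _ h
  · rintro ⟨k, rfl⟩
    rw [mul_assoc, forall_exists_mem_Ioo_dvd_iff_isSuccPrelimit hb, isSuccPrelimit_iff_omega0_dvd]
    exact ⟨dvd_mul_right _ _, dvd_mul_right _ _⟩

theorem opow_dvd_iff_forall_lt {b γ x : Ordinal} (hb : b ≠ 0) (hγ : IsSuccLimit γ) :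
    b ^ γ ∣ x ↔ ∀ δ < γ, b ^ δ ∣ x := by
  refine ⟨fun h δ hδ => (opow_dvd_opow _ hδ.le).trans h, fun h => ?_⟩
  have hmod : x % b ^ γ < b ^ γ := mod_lt x (opow_pos γ (pos_iff_ne_zero.2 hb)).ne'
  obtain ⟨δ, hδ, hlt⟩ := (lt_opow_of_isSuccLimit hb hγ).1 hmod
  have hdvd : b ^ δ ∣ x % b ^ γ := by
    have hquot : b ^ δ ∣ b ^ γ * (x / b ^ γ) := (opow_dvd_opow _ hδ.le).mul_right _
    rw [← dvd_add_iff hquot, div_add_mod]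
    exact h δ hδ
  rw [dvd_iff_mod_eq_zero]
  by_contra hne
  exact (le_of_dvd hne hdvd).not_gt hlt

-- The stages of `iteratedDerivedSet` on `Ordinal.{u}` are indexed by `Ordinal.{u + 1}`.
theorem mem_iteratedDerivedSet_univ_iff_opow_dvd (γ : Ordinal.{u}) {x : Ordinal.{u}} (hx : x ≠ 0) :
    x ∈ Set.univᵈ[lift.{u + 1} γ] ↔ ω ^ γ ∣ x := by
  induction γ using limitRecOn generalizing x with
  | zero => simp
  | add_one γ ih =>
    rw [lift_add, lift_one, CantorBendixson.iteratedDerivedSet_succ, relDerivedSet_apply,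
      mem_inter_iff, mem_derivedSet, ih hx, opow_add_one]
    exact accPt_and_dvd_iff_mul_omega0_dvd (opow_pos γ omega0_pos) hx fun y hy => ih hy
  | limit γ hγ ih =>
    rw [CantorBendixson.iteratedDerivedSet_limit (isSuccLimit_lift.2 hγ), mem_iInter,
      opow_dvd_iff_forall_lt omega0_ne_zero hγ]
    constructor
    · exact fun h δ hδ => (ih δ hδ hx).1 (h ⟨lift δ, lift_lt.2 hδ⟩)
    · rintro h ⟨_, hδ⟩
      obtain ⟨δ, hδγ, rfl⟩ := lt_lift_iff.1 hδ
      exact (ih δ hδγ hx).2 (h δ hδγ)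

theorem mem_iteratedDerivedSet_Iic_iff {o γ : Ordinal.{u}} {x : Iic o} (hx : x.1 ≠ 0) :
    x ∈ Set.univᵈ[lift.{u + 1} γ] ↔ ω ^ γ ∣ x.1 := by
  have hopen : IsOpen (Iic o) := (isClopen_Iic_of_succOrder o).isOpen
  rw [← mem_iteratedDerivedSet_univ_iff_opow_dvd γ hx,
    ← preimage_iteratedDerivedSet_univ hopen.isOpenEmbedding_subtypeVal, mem_preimage]

theorem finite_setOf_dvd_le_mul_natCast (b : Ordinal) (n : ℕ) :
    {x | b ∣ x ∧ x ≤ b * n}.Finite := by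
  obtain rfl | hb := eq_zero_or_pos b
  · simp
  refine ((finite_Iic n).image fun m : ℕ => b * m).subset ?_
  rintro _ ⟨⟨k, rfl⟩, hk⟩
  rw [mul_le_mul_iff_right₀ hb] at hk
  obtain ⟨m, rfl⟩ := eq_natCast_of_le_natCast hk
  exact ⟨m, Nat.cast_le.1 hk, rfl⟩

theorem finite_iteratedDerivedSet_Iic_opow_mul (γ : Ordinal.{u}) (d : ℕ) :
    (Set.univ : Set (Iic (ω ^ γ * d)))ᵈ[lift.{u + 1} γ].Finite := by
  refine ((finite_setOf_dvd_le_mul_natCast (ω ^ γ) d).preimage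
    Subtype.val_injective.injOn).subset fun x hx => ⟨?_, x.2⟩
  by_cases hx0 : x.1 = 0
  · exact hx0 ▸ dvd_zero _
  · exact (mem_iteratedDerivedSet_Iic_iff hx0).1 hx

/-- Left translation by `succ a` as an isomorphism from `[0, o]` onto its final segment `(a, o]`,
for `o` absorbing `succ a` on the left. -/
noncomputable def iicOrderIsoIoi {o : Ordinal} (a : Iic o) (h : succ a.1 + o = o) :
    Iic o ≃o Ioi a where
  toFun x := ⟨⟨succ a.1 + x, (add_le_add_right x.2 _).trans h.le⟩,
    (lt_succ a.1).trans_le le_self_add⟩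
  invFun x := ⟨x - succ a.1, (Ordinal.sub_le_self _ _).trans x.1.2⟩
  left_inv _ := Subtype.ext (Ordinal.add_sub_cancel _ _)
  right_inv x := Subtype.ext (Subtype.ext (Ordinal.add_sub_cancel_of_le (succ_le_of_lt x.2)))
  map_rel_iff' := add_le_add_iff_left (succ a.1)

theorem isSelfSimilarSpace_Iic_opow {α : Ordinal} (hα : α ≠ 0) :
    IsSelfSimilarSpace (Iic (ω ^ α)) := by
  have hlim : IsSuccLimit (ω ^ α) := isSuccLimit_opow_left isSuccLimit_omega0 hα
  have : Nontrivial (Iic (ω ^ α)) :=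
    ⟨⟨0, mem_Iic.2 zero_le⟩, ⊤, fun h => (opow_pos α omega0_pos).ne (congrArg Subtype.val h)⟩
  refine IsSelfSimilarSpace.of_forall_mem_nhds ⊤ fun U hU => ?_
  obtain ⟨a, ha, haU⟩ := nhds_top_basis.mem_iff.1 hU
  have hsucc : succ a.1 + ω ^ α = ω ^ α := add_omega0_opow (hlim.succ_lt ha)
  exact ⟨Ioi a, haU, isOpen_Ioi, ⟨(iicOrderIsoIoi a hsucc).toHomeomorph.symm⟩⟩

end Ordinal

/-- For an ordinal `α ≥ 1` and a natural number `d ≥ 1`, the ordinal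
space `ω ^ α * d + 1` (i.e. the set of ordinals `β ≤ ω ^ α * d` with the order
topology) is self-similar if and only if `d = 1`. -/
theorem selfSimilar_ordinal_space_iff
    (α : Ordinal) (hα : 1 ≤ α) (d : ℕ) (hd : 1 ≤ d) :
    IsSelfSimilarSpace (Set.Iic (omega0 ^ α * d)) ↔ d = 1 := by
  constructor
  · intro hself
    have hpos : 0 < ω ^ α := opow_pos α omega0_pos
    have hle : ω ^ α ≤ ω ^ α * d := le_mul_of_one_le_right hpos.le (Nat.one_le_cast.2 hd)
    have : TotallySeparatedSpace (Iic (ω ^ α * d)) := totallySeparatedSpace_of_succOrder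
    have hsub := hself.subsingleton_iteratedDerivedSet (finite_iteratedDerivedSet_Iic_opow_mul α d)
    have heq : (⟨ω ^ α, hle⟩ : Iic (ω ^ α * d)) = ⟨ω ^ α * d, self_mem_Iic⟩ :=
      hsub ((mem_iteratedDerivedSet_Iic_iff hpos.ne').2 dvd_rfl)
        ((mem_iteratedDerivedSet_Iic_iff (hpos.trans_le hle).ne').2 (dvd_mul_right _ _))
    have hmul : ω ^ α * d = ω ^ α := congrArg Subtype.val heq.symm
    exact Nat.cast_eq_one.1 ((mul_eq_left₀ hpos.ne').1 hmul)
  · rintro rfl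
    rw [Nat.cast_one, mul_one]
    exact isSelfSimilarSpace_Iic_opow (one_le_iff_ne_zero.1 hα)
end
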